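/- arXiv:2603.29348 — 4 statements merged into one kernel-verified Lean document; each statement's English description precedes it below -/
import Mathlib

section
/- Let ψ : ℝ^n → ℝ be μ-strongly convex (μ > 0), let C ⊆ ℝ^n be nonempty, closed and convex, let x ∈ ℝ^n and x* ∈ ∂ψ(x). A point x̂ ∈ C is the Bregman projection Π_C^{x*}(x) of x onto C if and only if there exists x̂* ∈ ∂ψ(x̂) such that ⟨x̂* − x*, y − x̂⟩ ≥ 0 for all y ∈ C; and this holds if and only if there exists x̂* ∈ ∂ψ(x̂) such that D_ψ^{x̂*}(x̂, y) ≤ D_ψ^{x*}(x, y) − D_ψ^{x*}(x, x̂) for all y ∈ C. -/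
/-!
A Bregman projection minimizes the convex function `y ↦ ψ y - ⟪xs, y⟫` over `C`, so the content
is the first-order optimality condition for constrained convex minimization. It follows from
Hahn-Banach (`exists_subgrad_of_min`): a real convex function on `ℝ^n` is continuous, so the strict
epigraph of `ψ` is open, and minimality makes it disjoint from
`{(y, r) | y ∈ C, r = ψ xhat + ⟪xs, y - xhat⟫}`. The slope of a separating hyperplane is the
required subgradient at `xhat`. The converse is the subgradient inequality, and the two variational
conditions coincide by the identity
`D^{xs}(x, y) - D^{xs}(x, xhat) - D^{xhs}(xhat, y) = ⟪xhs - xs, y - xhat⟫`.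
-/

open MeasureTheory ProbabilityTheory RealInnerProductSpace
open scoped BigOperators

noncomputable section

/-- `xs` is a subgradient of `ψ` at `x`: `ψ(y) ≥ ψ(x) + ⟨xs, y - x⟩` for all `y`. -/
def IsSubgrad {n : ℕ} (ψ : EuclideanSpace ℝ (Fin n) → ℝ) (x xs : EuclideanSpace ℝ (Fin n)) : Prop :=
  ∀ y, ψ x + ⟪xs, y - x⟫ ≤ ψ y

/-- Bregman distance `D_ψ^{xs}(x, y) = ψ(y) - ψ(x) - ⟨xs, y - x⟩`. -/
def Breg {n : ℕ} (ψ : EuclideanSpace ℝ (Fin n) → ℝ) (x xs y : EuclideanSpace ℝ (Fin n)) : ℝ :=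
  ψ y - ψ x - ⟪xs, y - x⟫

/-- `ψ` is `α`-strongly convex:
`ψ(y) ≥ ψ(x) + ⟨xs, y - x⟩ + (α/2)‖y - x‖²` for all `x, y` and all subgradients `xs ∈ ∂ψ(x)`. -/
def SubgradStrongConvex {n : ℕ} (ψ : EuclideanSpace ℝ (Fin n) → ℝ) (α : ℝ) : Prop :=
  ∀ x y xs, IsSubgrad ψ x xs → ψ x + ⟪xs, y - x⟫ + α / 2 * ‖y - x‖ ^ 2 ≤ ψ y

/-- Fenchel conjugate `ψ*(p) = sup_z (⟨p, z⟩ - ψ(z))`. -/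
def fenchel {n : ℕ} (ψ : EuclideanSpace ℝ (Fin n) → ℝ) (p : EuclideanSpace ℝ (Fin n)) : ℝ :=
  ⨆ z, (⟪p, z⟫ - ψ z)

/-- `xhat` is the Bregman projection of `x` onto `C` w.r.t. `ψ` and the subgradient `xs`:
it belongs to `C` and minimizes `y ↦ D_ψ^{xs}(x, y)` over `C`. -/
def IsBregProj {n : ℕ} (ψ : EuclideanSpace ℝ (Fin n) → ℝ) (x xs : EuclideanSpace ℝ (Fin n))
    (C : Set (EuclideanSpace ℝ (Fin n))) (xhat : EuclideanSpace ℝ (Fin n)) : Prop :=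
  xhat ∈ C ∧ ∀ y ∈ C, Breg ψ x xs xhat ≤ Breg ψ x xs y

/-- The proximity objective `F(x) = (1/m) ∑_{i=1}^m f_i(x)`. -/
def Fobj {n m : ℕ} (f : Fin m → EuclideanSpace ℝ (Fin n) → ℝ) (v : EuclideanSpace ℝ (Fin n)) : ℝ :=
  (m : ℝ)⁻¹ * ∑ i, f i v

/-- The set of (global) minimizers of `F = (1/m) ∑ f_i`. -/
def ArgminSet {n m : ℕ} (f : Fin m → EuclideanSpace ℝ (Fin n) → ℝ) :
    Set (EuclideanSpace ℝ (Fin n)) :=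
  {z | ∀ y, Fobj f z ≤ Fobj f y}

/-- Squared Bregman distance from `z` (with subgradient `zs`) to a set `X`:
`inf_{w ∈ X} D_ψ^{zs}(z, w)`. -/
def distSq {n : ℕ} (ψ : EuclideanSpace ℝ (Fin n) → ℝ) (z zs : EuclideanSpace ℝ (Fin n))
    (X : Set (EuclideanSpace ℝ (Fin n))) : ℝ :=
  ⨅ w : X, Breg ψ z zs (w : EuclideanSpace ℝ (Fin n))

/-- Three-point identity for Bregman distances. -/
lemma breg_three_point {n : ℕ} (ψ : EuclideanSpace ℝ (Fin n) → ℝ)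
    (x xs xhat xhs y : EuclideanSpace ℝ (Fin n)) :
    Breg ψ x xs y - Breg ψ x xs xhat - Breg ψ xhat xhs y = ⟪xhs - xs, y - xhat⟫ := by
  simp only [Breg, inner_sub_left, inner_sub_right]
  ring

/-- First-order optimality condition: if `xhat` minimizes `ψ - ⟪xs, ·⟫` over the convex set `C`,
some subgradient of `ψ` at `xhat` satisfies the variational inequality. -/
lemma exists_subgrad_of_min {n : ℕ} {ψ : EuclideanSpace ℝ (Fin n) → ℝ}
    (hψ : ConvexOn ℝ Set.univ ψ) {C : Set (EuclideanSpace ℝ (Fin n))} (hC : Convex ℝ C)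
    {xs xhat : EuclideanSpace ℝ (Fin n)} (hxhat : xhat ∈ C)
    (hmin : ∀ y ∈ C, ψ xhat + ⟪xs, y - xhat⟫ ≤ ψ y) :
    ∃ xhs, IsSubgrad ψ xhat xhs ∧ ∀ y ∈ C, 0 ≤ ⟪xhs - xs, y - xhat⟫ := by
  have hcont : Continuous ψ := by
    rw [← continuousOn_univ]
    exact hψ.continuousOn isOpen_univ
  have hSconv : Convex ℝ {p : EuclideanSpace ℝ (Fin n) × ℝ | ψ p.1 < p.2} := by
    simpa using hψ.convex_strict_epigraph
  have hSopen : IsOpen {p : EuclideanSpace ℝ (Fin n) × ℝ | ψ p.1 < p.2} :=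
    isOpen_lt (hcont.comp continuous_fst) continuous_snd
  have hTconv : Convex ℝ {p : EuclideanSpace ℝ (Fin n) × ℝ |
      p.1 ∈ C ∧ p.2 = ψ xhat + ⟪xs, p.1 - xhat⟫} := by
    rintro ⟨y, r⟩ ⟨hy, hr⟩ ⟨z, s⟩ ⟨hz, hs⟩ a b ha hb hab
    refine ⟨hC hy hz ha hb hab, ?_⟩
    obtain rfl : b = 1 - a := by linarith
    simp only [Prod.snd_add, Prod.smul_snd, Prod.fst_add, Prod.smul_fst, smul_eq_mul,
      inner_sub_right, inner_add_right, real_inner_smul_right] at hr hs ⊢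
    rw [hr, hs]
    ring
  obtain ⟨f, u, hfS, hfT⟩ := geometric_hahn_banach_open hSconv hSopen hTconv
    (Set.disjoint_left.2 fun p hp hq => by
      have := hmin p.1 hq.1
      have h1 : ψ p.1 < p.2 := hp
      linarith [hq.2])
  -- Write `f (y, r) = ⟪a, y⟫ + b * r`.
  obtain ⟨a, b, hf⟩ : ∃ (a : EuclideanSpace ℝ (Fin n)) (b : ℝ), ∀ y r,
      f (y, r) = ⟪a, y⟫ + b * r := by
    refine ⟨(InnerProductSpace.toDual ℝ _).symm
      (f.comp (ContinuousLinearMap.inl ℝ (EuclideanSpace ℝ (Fin n)) ℝ)), f (0, 1), fun y r => ?_⟩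
    have h : ((y, r) : EuclideanSpace ℝ (Fin n) × ℝ) = (y, 0) + r • (0, 1) := by simp
    rw [h, map_add, map_smul, InnerProductSpace.toDual_symm_apply]
    simp [mul_comm]
  have hS : ∀ y r, ψ y < r → ⟪a, y⟫ + b * r < u := fun y r h => by
    rw [← hf]; exact hfS (y, r) h
  have hT : ∀ y ∈ C, u ≤ ⟪a, y⟫ + b * (ψ xhat + ⟪xs, y - xhat⟫) := fun y h => by
    rw [← hf]; exact hfT (y, _) ⟨h, rfl⟩
  have hT0 := hT xhat hxhat
  rw [sub_self, inner_zero_right, add_zero] at hT0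
  -- The hyperplane is not vertical: it separates `(xhat, ψ xhat + 1)` from `(xhat, ψ xhat)`.
  have hb : b < 0 := by
    have := hS xhat (ψ xhat + 1) (by linarith)
    linarith
  have hS' : ∀ y, ⟪a, y⟫ + b * ψ y ≤ u := fun y => by
    by_contra! h
    have hb0 : b ≠ 0 := hb.ne
    have hd : b * ((⟪a, y⟫ + b * ψ y - u) / (-b)) = -(⟪a, y⟫ + b * ψ y - u) := by
      field_simp
    have := hS y (ψ y + (⟪a, y⟫ + b * ψ y - u) / (-b))
      (by have : 0 < (⟪a, y⟫ + b * ψ y - u) / (-b) := div_pos (by linarith) (by linarith)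
          linarith)
    rw [mul_add, hd] at this
    linarith
  have hu := hS' xhat
  have hc : 0 < (-b)⁻¹ := inv_pos.2 (by linarith)
  have hb0 : b ≠ 0 := hb.ne
  have hcb : (-b)⁻¹ * b = -1 := by field_simp
  refine ⟨(-b)⁻¹ • a, fun y => ?_, fun y hy => ?_⟩
  · have h := mul_le_mul_of_nonneg_left ((hS' y).trans hT0) hc.le
    rw [mul_add, mul_add, ← mul_assoc, ← mul_assoc, hcb] at h
    rw [real_inner_smul_left, inner_sub_right, mul_sub]
    linarith
  · have h := mul_le_mul_of_nonneg_left (hu.trans (hT y hy)) hc.le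
    rw [mul_add, mul_add, ← mul_assoc, ← mul_assoc, hcb] at h
    rw [inner_sub_left, real_inner_smul_left, inner_sub_right a, mul_sub]
    linarith

/-- characterization of the Bregman projection onto a nonempty closed convex set
by variational inequalities. -/
theorem stmt1 {n : ℕ} (ψ : EuclideanSpace ℝ (Fin n) → ℝ) (μ : ℝ) (hμ : 0 < μ)
    (hψconv : ConvexOn ℝ Set.univ ψ) (hsc : SubgradStrongConvex ψ μ)
    (C : Set (EuclideanSpace ℝ (Fin n))) (hCne : C.Nonempty) (hCclosed : IsClosed C)
    (hCconv : Convex ℝ C)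
    (x xs : EuclideanSpace ℝ (Fin n)) (hxs : IsSubgrad ψ x xs)
    (xhat : EuclideanSpace ℝ (Fin n)) (hxhatC : xhat ∈ C) :
    (IsBregProj ψ x xs C xhat ↔
      ∃ xhs, IsSubgrad ψ xhat xhs ∧ ∀ y ∈ C, 0 ≤ ⟪xhs - xs, y - xhat⟫) ∧
    (IsBregProj ψ x xs C xhat ↔
      ∃ xhs, IsSubgrad ψ xhat xhs ∧
        ∀ y ∈ C, Breg ψ xhat xhs y ≤ Breg ψ x xs y - Breg ψ x xs xhat) := by
  have key : IsBregProj ψ x xs C xhat ↔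
      ∃ xhs, IsSubgrad ψ xhat xhs ∧ ∀ y ∈ C, 0 ≤ ⟪xhs - xs, y - xhat⟫ := by
    constructor
    · rintro ⟨-, hmin⟩
      refine exists_subgrad_of_min hψconv hCconv hxhatC fun y hy => ?_
      have h := hmin y hy
      simp only [Breg, inner_sub_right] at h ⊢
      linarith
    · rintro ⟨xhs, hsub, hvi⟩
      refine ⟨hxhatC, fun y hy => ?_⟩
      have h1 := breg_three_point ψ x xs xhat xhs y
      have h2 := hvi y hy
      have h3 : 0 ≤ Breg ψ xhat xhs y := by
        have := hsub y
        rw [Breg]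
        linarith
      linarith
  refine ⟨key, key.trans (exists_congr fun xhs => and_congr_right fun _ =>
    forall₂_congr fun y _ => ?_)⟩
  rw [← breg_three_point ψ x xs xhat xhs y, sub_nonneg]
end
end

section
/- Let f_1, …, f_m : ℝ^n → ℝ be convex and differentiable with L_i-Lipschitz gradients (L_i > 0), nonnegative, with f_i(x) = 0 if and only if x ∈ C_i, and suppose C = ∩_{i=1}^m C_i is nonempty. Fix x ∈ ℝ^n, a subset J ⊆ {1,…,m}, and weights w_i > 0 (i ∈ J) with ∑_{i∈J} w_i = 1. Define α = ∑_{i∈J} w_i ∇f_i(x), β = ⟨α, x⟩ − ∑_{i∈J} (w_i/L_i)‖∇f_i(x)‖², and the halfspace H = {z ∈ ℝ^n : ⟨α, z⟩ ≤ β}. Then C ⊆ H; moreover, if ∑_{i∈J} w_i‖∇f_i(x)‖² > 0, then ⟨α, x⟩ > β, i.e., x ∉ H. -/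
/-!
The heart of the matter is the cocoercivity inequality `‖∇f(x)‖² / L ≤ ⟨∇f(x), x - z⟩` for a
convex, nonnegative `f` with `L`-Lipschitz gradient and a zero `z` of `f` (where `∇f` vanishes
since `z` is a minimizer). It is derived by applying the quadratic upper bound
(`descent_bound`) twice: a gradient step from `x` and nonnegativity of `f` give
`‖∇f(x)‖² / (2L) ≤ f(x)`, and the step from `z` to `z + ∇f(x) / L`, compared with the tangent
plane of `f` at `x`, gives `f(x) + ‖∇f(x)‖² / (2L) ≤ ⟨∇f(x), x - z⟩`.
The weighted sum of these inequalities over `J` is the inclusion `C ⊆ H`; the strict inequality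
only says that `∑ (w_i / L_i) ‖∇f_i(x)‖²` is positive.
-/

open MeasureTheory ProbabilityTheory RealInnerProductSpace
open scoped BigOperators

noncomputable section

lemma hasDerivAt_line {n : ℕ} {f : EuclideanSpace ℝ (Fin n) → ℝ}
    {g : EuclideanSpace ℝ (Fin n) → EuclideanSpace ℝ (Fin n)}
    (hg : ∀ z, HasGradientAt f (g z) z) (y h : EuclideanSpace ℝ (Fin n)) (t : ℝ) :
    HasDerivAt (fun s : ℝ => f (y + s • h)) ⟪g (y + t • h), h⟫ t := by
  have h1 : HasDerivAt (fun s : ℝ => y + s • h) h t := by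
    simpa using ((hasDerivAt_id t).smul_const h).const_add y
  have h2 := (hg (y + t • h)).hasFDerivAt.comp_hasDerivAt t h1
  simp only [InnerProductSpace.toDual_apply_apply] at h2
  exact h2

lemma convex_tangent_le {n : ℕ} {f : EuclideanSpace ℝ (Fin n) → ℝ}
    {g : EuclideanSpace ℝ (Fin n) → EuclideanSpace ℝ (Fin n)}
    (hf : ConvexOn ℝ Set.univ f) (hg : ∀ z, HasGradientAt f (g z) z)
    (x y : EuclideanSpace ℝ (Fin n)) : f x + ⟪g x, y - x⟫ ≤ f y := by
  have hc : ConvexOn ℝ Set.univ (fun s : ℝ => f (x + s • (y - x))) := by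
    have := hf.comp_affineMap (AffineMap.lineMap x y : ℝ →ᵃ[ℝ] EuclideanSpace ℝ (Fin n))
    simpa [Function.comp_def, AffineMap.lineMap_apply, add_comm] using this
  have hd := hasDerivAt_line hg x (y - x) 0
  have := hc.le_slope_of_hasDerivAt (Set.mem_univ 0) (Set.mem_univ 1) one_pos hd
  simp [slope_def_field] at this
  linarith

/-- The quadratic upper bound (descent lemma) for functions with Lipschitz gradient. -/
lemma descent_bound {n : ℕ} {f : EuclideanSpace ℝ (Fin n) → ℝ}
    {g : EuclideanSpace ℝ (Fin n) → EuclideanSpace ℝ (Fin n)} {L : ℝ}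
    (hg : ∀ z, HasGradientAt f (g z) z) (hlip : ∀ z w, ‖g z - g w‖ ≤ L * ‖z - w‖)
    (y h : EuclideanSpace ℝ (Fin n)) :
    f (y + h) ≤ f y + ⟪g y, h⟫ + L / 2 * ‖h‖ ^ 2 := by
  -- The gap between `f` and its quadratic model decreases along the segment from `y` to `y + h`.
  have hd : ∀ t : ℝ, HasDerivAt
      (fun s : ℝ => f (y + s • h) - s * ⟪g y, h⟫ - s ^ 2 * (L / 2 * ‖h‖ ^ 2))
      (⟪g (y + t • h), h⟫ - ⟪g y, h⟫ - 2 * t * (L / 2 * ‖h‖ ^ 2)) t := by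
    intro t
    have h1 := (hasDerivAt_id t).mul_const ⟪g y, h⟫
    have h2 := (hasDerivAt_pow 2 t).mul_const (L / 2 * ‖h‖ ^ 2)
    have h3 := ((hasDerivAt_line hg y h t).sub h1).sub h2
    simp only [one_mul, Nat.cast_ofNat, Nat.add_one_sub_one, pow_one] at h3
    exact h3
  have hanti := antitoneOn_of_deriv_nonpos (convex_Icc (0 : ℝ) 1)
    (fun t _ => (hd t).continuousAt.continuousWithinAt)
    (fun t _ => (hd t).differentiableAt.differentiableWithinAt)
    (fun t ht => by
      rw [interior_Icc] at ht
      rw [(hd t).deriv, ← inner_sub_left]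
      have h1 := real_inner_le_norm (g (y + t • h) - g y) h
      have h2 := hlip (y + t • h) y
      rw [add_sub_cancel_left, norm_smul, Real.norm_of_nonneg ht.1.le] at h2
      nlinarith [mul_le_mul_of_nonneg_right h2 (norm_nonneg h)])
  have := hanti (Set.left_mem_Icc.2 zero_le_one) (Set.right_mem_Icc.2 zero_le_one) zero_le_one
  simp at this
  linarith

/-- Cocoercivity of the gradient between `x` and a zero `z` of a nonnegative function. -/
lemma norm_grad_sq_div_le {n : ℕ} {f : EuclideanSpace ℝ (Fin n) → ℝ}
    {g : EuclideanSpace ℝ (Fin n) → EuclideanSpace ℝ (Fin n)} {L : ℝ} (hL : 0 < L)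
    (hf : ConvexOn ℝ Set.univ f) (hg : ∀ z, HasGradientAt f (g z) z)
    (hlip : ∀ z w, ‖g z - g w‖ ≤ L * ‖z - w‖) (h0 : ∀ z, 0 ≤ f z)
    (x z : EuclideanSpace ℝ (Fin n)) (hz : f z = 0) :
    ‖g x‖ ^ 2 / L ≤ ⟪g x, x⟫ - ⟪g x, z⟫ := by
  have hgz : g z = 0 := by
    have hmin : IsLocalMin f z := Filter.Eventually.of_forall fun y => hz ▸ h0 y
    simpa using hmin.hasFDerivAt_eq_zero (hg z).hasFDerivAt
  have hx := descent_bound hg hlip x (-(L⁻¹ • g x))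
  have hx0 := h0 (x + -(L⁻¹ • g x))
  have hzz := descent_bound hg hlip z (L⁻¹ • g x)
  have ht := convex_tangent_le hf hg x (z + L⁻¹ • g x)
  have e : L / 2 * (L⁻¹ * ‖g x‖) ^ 2 = L⁻¹ * ‖g x‖ ^ 2 / 2 := by field_simp
  simp only [norm_neg, norm_smul, norm_inv, Real.norm_of_nonneg hL.le, inner_neg_right,
    inner_smul_right, inner_sub_right, inner_add_right, hgz, inner_zero_left, hz,
    real_inner_self_eq_norm_sq, e] at hx hzz ht
  rw [div_eq_inv_mul]
  linarith

/-- the halfspace `H = {z : ⟨α, z⟩ ≤ β}` with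
`α = ∑_{i∈J} w_i ∇f_i(x)` and `β = ⟨α, x⟩ − ∑_{i∈J} (w_i/L_i)‖∇f_i(x)‖²`
contains `C = ⋂ C_i`; and if `∑_{i∈J} w_i ‖∇f_i(x)‖² > 0` then `⟨α, x⟩ > β`, i.e. `x ∉ H`. -/
theorem stmt4 {n m : ℕ} (f : Fin m → EuclideanSpace ℝ (Fin n) → ℝ)
    (C : Fin m → Set (EuclideanSpace ℝ (Fin n)))
    (L : Fin m → ℝ) (hL : ∀ i, 0 < L i)
    (hfconv : ∀ i, ConvexOn ℝ Set.univ (f i))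
    (f' : Fin m → EuclideanSpace ℝ (Fin n) → EuclideanSpace ℝ (Fin n))
    (hdiff : ∀ i z, HasGradientAt (f i) (f' i z) z)
    (hlip : ∀ i z w, ‖f' i z - f' i w‖ ≤ L i * ‖z - w‖)
    (hnonneg : ∀ i z, 0 ≤ f i z)
    (hzero : ∀ i z, f i z = 0 ↔ z ∈ C i)
    (hCne : (⋂ i, C i).Nonempty)
    (x : EuclideanSpace ℝ (Fin n)) (J : Finset (Fin m)) (w : Fin m → ℝ)
    (hw : ∀ i ∈ J, 0 < w i) (hwsum : ∑ i ∈ J, w i = 1) :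
    (∀ z ∈ ⋂ i, C i,
      ⟪∑ i ∈ J, w i • f' i x, z⟫ ≤
        ⟪∑ i ∈ J, w i • f' i x, x⟫ - ∑ i ∈ J, w i / L i * ‖f' i x‖ ^ 2) ∧
    ((0 < ∑ i ∈ J, w i * ‖f' i x‖ ^ 2) →
      ⟪∑ i ∈ J, w i • f' i x, x⟫ - ∑ i ∈ J, w i / L i * ‖f' i x‖ ^ 2 <
        ⟪∑ i ∈ J, w i • f' i x, x⟫) := by
  have hsum : ∀ v : EuclideanSpace ℝ (Fin n),
      ⟪∑ i ∈ J, w i • f' i x, v⟫ = ∑ i ∈ J, w i * ⟪f' i x, v⟫ := fun v => by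
    simp [sum_inner, inner_smul_left]
  refine ⟨fun z hz => ?_, fun hpos => ?_⟩
  · rw [hsum, hsum, ← Finset.sum_sub_distrib]
    refine Finset.sum_le_sum fun i hi => ?_
    have h := norm_grad_sq_div_le (hL i) (hfconv i) (hdiff i) (hlip i) (hnonneg i) x z
      ((hzero i z).2 (Set.mem_iInter.1 hz i))
    have h' := mul_le_mul_of_nonneg_left h (hw i hi).le
    rw [div_mul_eq_mul_div, ← mul_div_assoc']
    linarith
  · obtain ⟨i, hi, hi0⟩ := Finset.exists_lt_of_sum_lt (Finset.sum_const_zero.trans_lt hpos)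
    refine sub_lt_self _ (Finset.sum_pos' (fun j hj => ?_) ⟨i, hi, ?_⟩)
    · have := hw j hj
      have := hL j
      positivity
    · rw [div_mul_eq_mul_div]
      exact div_pos hi0 (hL i)
end
end

section
/- Let ψ : ℝ^n → ℝ be μ-strongly convex (μ > 0) and f_1, …, f_m : ℝ^n → ℝ convex and differentiable with L_i-Lipschitz gradients; L_max = max_i L_i. Let {x_k}_{k≥0} ⊆ ℝ^n be any sequence, J_k ⊆ {1,…,m} subsets, w_{i,k} > 0 with ∑_{i∈J_k} w_{i,k} = 1, and l_{J_k}* ∈ ℝ with l_{J_k}* ≤ inf_{x∈ℝ^n} ∑_{i∈J_k} w_{i,k} f_i(x). Let {λ_k}_{k≥0} be a nonincreasing positive sequence, λ_{-1} = λ_0, t_{-1} = γ_b > 0, and let t_k be given by the DecmSPS rule t_k = λ_k · min{ μ·(∑_{i∈J_k} w_{i,k}(f_i(x_k) − l_{J_k}*)) / ‖∑_{i∈J_k} w_{i,k}∇f_i(x_k)‖² , t_{k−1}/λ_{k−1} } (the first argument of the min being +∞ when ∑_{i∈J_k} w_{i,k}∇f_i(x_k) = 0). Then t_{k+1} ≤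 t_k for all k ≥ 0, and λ_k·L̃ ≤ t_k ≤ (γ_b/λ_0)·λ_k for all k ≥ 0, where L̃ = min{ μ/(2 L_max), γ_b/λ_0 }. -/
/-!
The content of the lower bound is that the Polyak quotient
`μ (∑ w_i (f_i(x) - l)) / ‖∑ w_i ∇f_i(x)‖²` is at least `μ / (2 L_max)`. Each `f_i` satisfies the
quadratic upper bound `f_i(y) ≤ f_i(x) + ⟨∇f_i(x), y - x⟩ + (L_max/2)‖y - x‖²` (`descent_lemma`).
Averaging these bounds with the weights `w_i` and taking the gradient step `y = x - L_max⁻¹ g`, where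
`g = ∑ w_i ∇f_i(x)`, gives `l ≤ ∑ w_i f_i(y) ≤ ∑ w_i f_i(x) - ‖g‖² / (2 L_max)`
(`norm_sq_weighted_gradient_le`).

With this, the normalised steps `r_k = t_k / λ_k` satisfy `r_k ≤ r_{k-1}` and
`r_k ≥ min (μ / (2 L_max)) r_{k-1}`, starting from `r_{-1} = γ_b / λ_0`. Induction puts `r_k` between
`L̃ = min (μ / (2 L_max)) (γ_b / λ_0)` and `γ_b / λ_0`. As `r_k` and `λ_k` are nonnegative and
nonincreasing, so is their product `t_k`.
-/

open MeasureTheory ProbabilityTheory RealInnerProductSpace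
open scoped BigOperators

noncomputable section

/-- Quadratic upper bound for a function with `K`-Lipschitz gradient. -/
lemma descent_lemma {E : Type*} [NormedAddCommGroup E] [InnerProductSpace ℝ E] [CompleteSpace E]
    {g : E → ℝ} {g' : E → E} (hg : ∀ z, HasGradientAt g (g' z) z) {K : ℝ}
    (hK : ∀ z w, ‖g' z - g' w‖ ≤ K * ‖z - w‖) (x d : E) :
    g (x + d) ≤ g x + ⟪g' x, d⟫ + K / 2 * ‖d‖ ^ 2 := by
  -- Compare the restriction of `g` to the segment with the quadratic `B`, which dominates it at
  -- `s = 0` and has the larger derivative on `[0, 1)`.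
  have hline : ∀ s : ℝ, HasDerivAt (fun s : ℝ => g (x + s • d)) ⟪g' (x + s • d), d⟫ s := by
    intro s
    have h1 : HasDerivAt (fun s : ℝ => x + s • d) d s := by
      simpa using ((hasDerivAt_id s).smul_const d).const_add x
    exact ((hg (x + s • d)).hasFDerivAt.comp_hasDerivAt s h1).congr_deriv (by simp)
  have hB : ∀ s : ℝ, HasDerivAt
      (fun s : ℝ => g x + s * ⟪g' x, d⟫ + K / 2 * ‖d‖ ^ 2 * s ^ 2)
      (⟪g' x, d⟫ + K * ‖d‖ ^ 2 * s) s := by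
    intro s
    have h1 := (((hasDerivAt_id s).mul_const ⟪g' x, d⟫).const_add (g x)).add
      (((hasDerivAt_id s).pow 2).const_mul (K / 2 * ‖d‖ ^ 2))
    refine h1.congr_deriv ?_
    simp only [id]
    push_cast
    ring
  have key := image_le_of_deriv_right_le_deriv_boundary (a := 0) (b := 1)
    (fun s _ => (hline s).continuousAt.continuousWithinAt)
    (fun s _ => (hline s).hasDerivWithinAt) (by simp)
    (fun s _ => (hB s).continuousAt.continuousWithinAt)
    (fun s _ => (hB s).hasDerivWithinAt) ?_ (Set.right_mem_Icc.2 zero_le_one)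
  · simpa using key
  · intro s hs
    have h1 : ⟪g' (x + s • d) - g' x, d⟫ ≤ K * ‖d‖ ^ 2 * s := by
      calc ⟪g' (x + s • d) - g' x, d⟫ ≤ ‖g' (x + s • d) - g' x‖ * ‖d‖ := real_inner_le_norm _ _
        _ ≤ K * ‖x + s • d - x‖ * ‖d‖ := by gcongr; exact hK _ _
        _ = K * ‖d‖ ^ 2 * s := by
          rw [add_sub_cancel_left, norm_smul, Real.norm_of_nonneg hs.1]
          ring
    rw [inner_sub_left] at h1
    linarith

/-- The bound `‖∇F(x)‖² ≤ 2K (F(x) - l)` for a convex combination `F = ∑ w_i f_i` of functions with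
`K`-Lipschitz gradients and a lower bound `l` of `F`. -/
lemma norm_sq_weighted_gradient_le {ι E : Type*} [NormedAddCommGroup E] [InnerProductSpace ℝ E]
    [CompleteSpace E] {f : ι → E → ℝ} {f' : ι → E → E}
    (hdiff : ∀ i z, HasGradientAt (f i) (f' i z) z) {K : ℝ} (hKpos : 0 < K)
    (hK : ∀ i z w, ‖f' i z - f' i w‖ ≤ K * ‖z - w‖) {J : Finset ι} {w : ι → ℝ}
    (hw : ∀ i ∈ J, 0 < w i) (hwsum : ∑ i ∈ J, w i = 1) {l : ℝ}
    (hl : ∀ y, l ≤ ∑ i ∈ J, w i * f i y) (x : E) :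
    ‖∑ i ∈ J, w i • f' i x‖ ^ 2 ≤ 2 * K * ∑ i ∈ J, w i * (f i x - l) := by
  have hsum : ∀ d : E, ∑ i ∈ J, w i * f i (x + d) ≤
      ∑ i ∈ J, w i * f i x + ⟪∑ i ∈ J, w i • f' i x, d⟫ + K / 2 * ‖d‖ ^ 2 := by
    intro d
    calc ∑ i ∈ J, w i * f i (x + d)
        ≤ ∑ i ∈ J, w i * (f i x + ⟪f' i x, d⟫ + K / 2 * ‖d‖ ^ 2) :=
          Finset.sum_le_sum fun i hi =>
            mul_le_mul_of_nonneg_left (descent_lemma (hdiff i) (hK i) x d) (hw i hi).le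
      _ = _ := by
          simp only [mul_add, Finset.sum_add_distrib, sum_inner, real_inner_smul_left]
          rw [← Finset.sum_mul, hwsum, one_mul]
  have hgap : ∑ i ∈ J, w i * (f i x - l) = ∑ i ∈ J, w i * f i x - l := by
    simp only [mul_sub, Finset.sum_sub_distrib]
    rw [← Finset.sum_mul, hwsum, one_mul]
  rw [hgap]
  set G := ∑ i ∈ J, w i • f' i x
  have h := (hl _).trans (hsum (-(K⁻¹ • G)))
  rw [inner_neg_right, real_inner_smul_right, real_inner_self_eq_norm_sq, norm_neg, norm_smul,
    Real.norm_of_nonneg (inv_nonneg.2 hKpos.le)] at h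
  have h2 : K⁻¹ * ‖G‖ ^ 2 - K / 2 * (K⁻¹ * ‖G‖) ^ 2 = ‖G‖ ^ 2 / (2 * K) := by
    field_simp
    ring
  have h3 : ‖G‖ ^ 2 / (2 * K) ≤ ∑ i ∈ J, w i * f i x - l := by linarith
  rw [div_le_iff₀ (by positivity)] at h3
  linarith

/-- Lemma on DecmSPS: the DecmSPS stepsizes are nonincreasing and satisfy
`λ_k·L̃ ≤ t_k ≤ (γ_b/λ_0)·λ_k`, where `L̃ = min{μ/(2 L_max), γ_b/λ_0}`. -/
theorem stmt5 {n m : ℕ} (hm : 0 < m)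
    (ψ : EuclideanSpace ℝ (Fin n) → ℝ) (μ : ℝ) (hμ : 0 < μ)
    (hψconv : ConvexOn ℝ Set.univ ψ) (hsc : SubgradStrongConvex ψ μ)
    (f : Fin m → EuclideanSpace ℝ (Fin n) → ℝ)
    (hfconv : ∀ i, ConvexOn ℝ Set.univ (f i))
    (f' : Fin m → EuclideanSpace ℝ (Fin n) → EuclideanSpace ℝ (Fin n))
    (hdiff : ∀ i z, HasGradientAt (f i) (f' i z) z)
    (L : Fin m → ℝ) (hL : ∀ i, 0 < L i)
    (hlip : ∀ i z w, ‖f' i z - f' i w‖ ≤ L i * ‖z - w‖)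
    (Lmax : ℝ) (hLmax : Lmax = ⨆ i, L i)
    (x : ℕ → EuclideanSpace ℝ (Fin n))
    (J : ℕ → Finset (Fin m)) (w : ℕ → Fin m → ℝ)
    (hw : ∀ k, ∀ i ∈ J k, 0 < w k i) (hwsum : ∀ k, ∑ i ∈ J k, w k i = 1)
    (l : ℕ → ℝ) (hl : ∀ k y, l k ≤ ∑ i ∈ J k, w k i * f i y)
    (lam : ℕ → ℝ) (hlampos : ∀ k, 0 < lam k) (hlammono : ∀ k, lam (k + 1) ≤ lam k)
    (γb : ℝ) (hγb : 0 < γb)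
    (t : ℕ → ℝ)
    (ht0a : ∑ i ∈ J 0, w 0 i • f' i (x 0) = 0 → t 0 = lam 0 * (γb / lam 0))
    (ht0b : ∑ i ∈ J 0, w 0 i • f' i (x 0) ≠ 0 →
      t 0 = lam 0 * min
        (μ * (∑ i ∈ J 0, w 0 i * (f i (x 0) - l 0)) / ‖∑ i ∈ J 0, w 0 i • f' i (x 0)‖ ^ 2)
        (γb / lam 0))
    (hta : ∀ k, ∑ i ∈ J (k + 1), w (k + 1) i • f' i (x (k + 1)) = 0 →
      t (k + 1) = lam (k + 1) * (t k / lam k))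
    (htb : ∀ k, ∑ i ∈ J (k + 1), w (k + 1) i • f' i (x (k + 1)) ≠ 0 →
      t (k + 1) = lam (k + 1) * min
        (μ * (∑ i ∈ J (k + 1), w (k + 1) i * (f i (x (k + 1)) - l (k + 1))) /
          ‖∑ i ∈ J (k + 1), w (k + 1) i • f' i (x (k + 1))‖ ^ 2)
        (t k / lam k)) :
    ∀ k, t (k + 1) ≤ t k ∧
      lam k * min (μ / (2 * Lmax)) (γb / lam 0) ≤ t k ∧
      t k ≤ γb / lam 0 * lam k := by
  have hbdd : BddAbove (Set.range L) := (Set.finite_range L).bddAbove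
  have hle : ∀ i, L i ≤ Lmax := fun i => hLmax ▸ le_ciSup hbdd i
  have hLpos : 0 < Lmax := (hL ⟨0, hm⟩).trans_le (hle _)
  have hlip' : ∀ i z w, ‖f' i z - f' i w‖ ≤ Lmax * ‖z - w‖ := fun i z w =>
    (hlip i z w).trans (mul_le_mul_of_nonneg_right (hle i) (norm_nonneg _))
  have hquot : ∀ k, ∑ i ∈ J k, w k i • f' i (x k) ≠ 0 →
      μ / (2 * Lmax) ≤ μ * (∑ i ∈ J k, w k i * (f i (x k) - l k)) /
        ‖∑ i ∈ J k, w k i • f' i (x k)‖ ^ 2 := by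
    intro k hk
    have hpos : 0 < ‖∑ i ∈ J k, w k i • f' i (x k)‖ ^ 2 := by positivity
    have hgrad := norm_sq_weighted_gradient_le hdiff hLpos hlip' (hw k) (hwsum k) (hl k) (x k)
    rw [div_le_div_iff₀ (by positivity) hpos]
    have := mul_le_mul_of_nonneg_left hgrad hμ.le
    linarith
  -- One step of the rule in terms of the normalised step `t k / lam k`; `r` is its predecessor.
  have hstep : ∀ k r,
      (∑ i ∈ J k, w k i • f' i (x k) = 0 → t k = lam k * r) →
      (∑ i ∈ J k, w k i • f' i (x k) ≠ 0 → t k = lam k * min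
        (μ * (∑ i ∈ J k, w k i * (f i (x k) - l k)) /
          ‖∑ i ∈ J k, w k i • f' i (x k)‖ ^ 2) r) →
      t k / lam k ≤ r ∧ min (μ / (2 * Lmax)) r ≤ t k / lam k := by
    intro k r ha hb
    have hne := (hlampos k).ne'
    by_cases hk : ∑ i ∈ J k, w k i • f' i (x k) = 0
    · rw [ha hk, mul_div_cancel_left₀ _ hne]
      exact ⟨le_rfl, min_le_right _ _⟩
    · rw [hb hk, mul_div_cancel_left₀ _ hne]
      exact ⟨min_le_right _ _, min_le_min_right _ (hquot k hk)⟩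
  have h0 := hstep 0 _ ht0a ht0b
  have hs := fun k => hstep (k + 1) _ (hta k) (htb k)
  have hbounds : ∀ k, min (μ / (2 * Lmax)) (γb / lam 0) ≤ t k / lam k ∧
      t k / lam k ≤ γb / lam 0 := by
    intro k
    induction k with
    | zero => exact ⟨h0.2, h0.1⟩
    | succ k ih =>
      exact ⟨(le_min (min_le_left _ _) ih.1).trans (hs k).2, (hs k).1.trans ih.2⟩
  have hmin : 0 < min (μ / (2 * Lmax)) (γb / lam 0) :=
    lt_min (by positivity) (div_pos hγb (hlampos 0))
  intro k
  obtain ⟨hlow, hup⟩ := hbounds k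
  refine ⟨?_, ?_, (div_le_iff₀ (hlampos k)).1 hup⟩
  · calc t (k + 1) ≤ t k / lam k * lam (k + 1) := (div_le_iff₀ (hlampos _)).1 (hs k).1
      _ ≤ t k / lam k * lam k :=
        mul_le_mul_of_nonneg_left (hlammono k) (hmin.le.trans hlow)
      _ = t k := div_mul_cancel₀ _ (hlampos k).ne'
  · rw [mul_comm]
    exact (le_div_iff₀ (hlampos k)).1 hlow
end
end

section
/- Let ψ : ℝ^n → ℝ be μ-strongly convex (μ > 0) and f_1, …, f_m : ℝ^n → ℝ convex and differentiable with L_i-Lipschitz gradients, nonnegative, with f_i(x) = 0 if and only if x ∈ C_i, and C = ∩_{i=1}^m C_i nonempty; L_max = max_i L_i. Fix x ∈ ℝ^n, x* ∈ ∂ψ(x), a subset J ⊆ {1,…,m}, weights w_i > 0 with ∑_{i∈J} w_i = 1, and suppose g := ∑_{i∈J} w_i ∇f_i(x) ≠ 0. Set β = ⟨g, x⟩ − ∑_{i∈J}(w_i/L_i)‖∇f_i(x)‖², H = {z : ⟨g, z⟩ ≤ β}, and L_adapt = ‖g‖² / ∑_{i∈J} w_i‖∇f_i(x)‖². If t̃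 ∈ (0, μ/(L_max·L_adapt)] and the point x̃ = ∇ψ*(x* − t̃·g) satisfies ⟨g, x̃⟩ = β, then x̃ is the Bregman projection of x onto H with respect to ψ and x*, i.e., x̃ = Π_H^{x*}(x). -/
/-!
The step `x̃ = ∇ψ*(p)`, `p = xs - t̃ g`, satisfies the optimality condition of the projection problem:
`p ∈ ∂ψ(x̃)`. Granting this, for every `y ∈ H`
`D(x, y) - D(x, x̃) ≥ ⟨p - xs, y - x̃⟩ = -t̃ (⟨g, y⟩ - β) ≥ 0`,
because `⟨g, x̃⟩ = β` and `t̃ > 0`.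

The relation `∇ψ*(p) = z ↔ p ∈ ∂ψ(z)` is proved from strong convexity, as `gradient` is
only meaningful once `ψ*` is known to be differentiable. The function `z ↦ ψ z - ⟨p, z⟩` is continuous
and grows quadratically, so it has a minimizer `z₀`, that is, `p ∈ ∂ψ(z₀)`
(`exists_isSubgrad`). Strong convexity at `z₀` then gives
`0 ≤ ψ*(q) - ψ*(p) - ⟨z₀, q - p⟩ ≤ ‖q - p‖² / (2μ)`, hence `∇ψ*(p) = z₀`
(`IsSubgrad.hasGradientAt_fenchel`).
-/

open MeasureTheory ProbabilityTheory RealInnerProductSpace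
open scoped BigOperators

noncomputable section

/-- The subdifferential of a strongly convex function is surjective as soon as it is nonempty at
one point `x`. -/
theorem exists_isSubgrad {n : ℕ} {ψ : EuclideanSpace ℝ (Fin n) → ℝ} {μ : ℝ} (hμ : 0 < μ)
    (hψ : ConvexOn ℝ Set.univ ψ) (hsc : SubgradStrongConvex ψ μ)
    {x xs : EuclideanSpace ℝ (Fin n)} (hxs : IsSubgrad ψ x xs)
    (p : EuclideanSpace ℝ (Fin n)) : ∃ z, IsSubgrad ψ z p := by
  have hcont : Continuous fun z => ψ z - ⟪p, z⟫ :=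
    hψ.locallyLipschitz.continuous.sub (by fun_prop)
  obtain ⟨z, hz⟩ := hcont.exists_forall_le' x (by
    -- Outside this ball the quadratic growth at `x` dominates the linear term `⟨xs - p, y - x⟩`.
    filter_upwards [(isCompact_closedBall x (2 * ‖xs - p‖ / μ)).compl_mem_cocompact] with y hy
    have hy' : 2 * ‖xs - p‖ / μ < ‖y - x‖ := by simpa [dist_eq_norm] using hy
    rw [div_lt_iff₀ hμ] at hy'
    have h1 := hsc x y xs hxs
    have h2 := neg_le_of_abs_le (abs_real_inner_le_norm (xs - p) (y - x))
    have h3 := mul_le_mul_of_nonneg_right hy'.le (norm_nonneg (y - x))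
    have h4 : ⟪xs - p, y - x⟫ = ⟪xs, y - x⟫ - (⟪p, y⟫ - ⟪p, x⟫) := by
      rw [inner_sub_left, inner_sub_right p]
    nlinarith)
  refine ⟨z, fun y => ?_⟩
  have := hz y
  rw [inner_sub_right]
  linarith

/-- Conjugacy of subgradients: `p ∈ ∂ψ(z)` implies that `ψ*` is differentiable at `p` with
`∇ψ*(p) = z`. -/
theorem IsSubgrad.hasGradientAt_fenchel {n : ℕ} {ψ : EuclideanSpace ℝ (Fin n) → ℝ} {μ : ℝ}
    (hμ : 0 < μ) (hsc : SubgradStrongConvex ψ μ) {z p : EuclideanSpace ℝ (Fin n)}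
    (hp : IsSubgrad ψ z p) : HasGradientAt (fenchel ψ) z p := by
  -- Strong convexity at `z`, with the linear term in `y - z` absorbed by Young's inequality.
  have key : ∀ q y, ⟪q, y⟫ - ψ y ≤ ⟪q, z⟫ - ψ z + 1 / (2 * μ) * ‖q - p‖ ^ 2 := by
    intro q y
    have h1 := hsc z y p hp
    have h2 := real_inner_le_norm (q - p) (y - z)
    have h3 : ⟪q - p, y - z⟫ = ⟪q, y⟫ - ⟪q, z⟫ - ⟪p, y - z⟫ := by
      rw [inner_sub_left, inner_sub_right q]
    have h4 : ‖q - p‖ * ‖y - z‖ ≤ 1 / (2 * μ) * ‖q - p‖ ^ 2 + μ / 2 * ‖y - z‖ ^ 2 := by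
      have h5 : 1 / (2 * μ) * ‖q - p‖ ^ 2 + μ / 2 * ‖y - z‖ ^ 2 - ‖q - p‖ * ‖y - z‖
          = 1 / (2 * μ) * (‖q - p‖ - μ * ‖y - z‖) ^ 2 := by
        field_simp
        ring
      have h6 : 0 ≤ 1 / (2 * μ) * (‖q - p‖ - μ * ‖y - z‖) ^ 2 := by positivity
      linarith
    linarith
  have hub : ∀ q, fenchel ψ q ≤ ⟪q, z⟫ - ψ z + 1 / (2 * μ) * ‖q - p‖ ^ 2 :=
    fun q => ciSup_le (key q)
  have hlb : ∀ q, ⟪q, z⟫ - ψ z ≤ fenchel ψ q := fun q =>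
    le_ciSup (f := fun y => ⟪q, y⟫ - ψ y) ⟨_, by rintro _ ⟨y, rfl⟩; exact key q y⟩ z
  have hval : fenchel ψ p = ⟪p, z⟫ - ψ z :=
    le_antisymm (by simpa using hub p) (hlb p)
  rw [hasGradientAt_iff_isLittleO]
  have hbig : (fun q => fenchel ψ q - fenchel ψ p - ⟪z, q - p⟫)
      =O[nhds p] fun q => ‖q - p‖ ^ 2 := by
    refine Asymptotics.IsBigO.of_bound (1 / (2 * μ)) (Filter.Eventually.of_forall fun q => ?_)
    have h1 := hub q
    have h2 := hlb q
    have h3 : ⟪z, q - p⟫ = ⟪q, z⟫ - ⟪p, z⟫ := by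
      rw [real_inner_comm, inner_sub_left]
    rw [Real.norm_eq_abs, Real.norm_eq_abs, abs_of_nonneg (sq_nonneg ‖q - p‖),
      abs_of_nonneg (by linarith)]
    linarith
  exact hbig.trans_isLittleO (Asymptotics.isLittleO_pow_sub_sub p one_lt_two)

/-- Theorem on the inexact projective stepsize: if
`t̃ ∈ (0, μ/(L_max·L_adapt)]` and `x̃ = ∇ψ*(xs − t̃·g)` lies on the hyperplane
`⟨g, x̃⟩ = β`, then `x̃` is the Bregman projection of `x` onto the halfspace
`H = {z : ⟨g, z⟩ ≤ β}`. -/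
theorem stmt6 {n m : ℕ} (ψ : EuclideanSpace ℝ (Fin n) → ℝ) (μ : ℝ) (hμ : 0 < μ)
    (hψconv : ConvexOn ℝ Set.univ ψ) (hsc : SubgradStrongConvex ψ μ)
    (f : Fin m → EuclideanSpace ℝ (Fin n) → ℝ)
    (C : Fin m → Set (EuclideanSpace ℝ (Fin n)))
    (hfconv : ∀ i, ConvexOn ℝ Set.univ (f i))
    (f' : Fin m → EuclideanSpace ℝ (Fin n) → EuclideanSpace ℝ (Fin n))
    (hdiff : ∀ i z, HasGradientAt (f i) (f' i z) z)
    (L : Fin m → ℝ) (hL : ∀ i, 0 < L i)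
    (hlip : ∀ i z w, ‖f' i z - f' i w‖ ≤ L i * ‖z - w‖)
    (hnonneg : ∀ i z, 0 ≤ f i z)
    (hzero : ∀ i z, f i z = 0 ↔ z ∈ C i)
    (hCne : (⋂ i, C i).Nonempty)
    (Lmax : ℝ) (hm : 0 < m) (hLmax : Lmax = ⨆ i, L i)
    (x xs : EuclideanSpace ℝ (Fin n)) (hxs : IsSubgrad ψ x xs)
    (J : Finset (Fin m)) (w : Fin m → ℝ)
    (hw : ∀ i ∈ J, 0 < w i) (hwsum : ∑ i ∈ J, w i = 1)
    (hg : ∑ i ∈ J, w i • f' i x ≠ 0)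
    (ttil : ℝ) (httilpos : 0 < ttil)
    (httille : ttil ≤ μ /
      (Lmax * (‖∑ i ∈ J, w i • f' i x‖ ^ 2 / ∑ i ∈ J, w i * ‖f' i x‖ ^ 2)))
    (hon : ⟪∑ i ∈ J, w i • f' i x,
        gradient (fenchel ψ) (xs - ttil • ∑ i ∈ J, w i • f' i x)⟫ =
      ⟪∑ i ∈ J, w i • f' i x, x⟫ - ∑ i ∈ J, w i / L i * ‖f' i x‖ ^ 2) :
    IsBregProj ψ x xs
      {z | ⟪∑ i ∈ J, w i • f' i x, z⟫ ≤
        ⟪∑ i ∈ J, w i • f' i x, x⟫ - ∑ i ∈ J, w i / L i * ‖f' i x‖ ^ 2}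
      (gradient (fenchel ψ) (xs - ttil • ∑ i ∈ J, w i • f' i x)) := by
  generalize (∑ i ∈ J, w i • f' i x) = g at *
  generalize ⟪g, x⟫ - ∑ i ∈ J, w i / L i * ‖f' i x‖ ^ 2 = β at *
  obtain ⟨z, hz⟩ := exists_isSubgrad hμ hψconv hsc hxs (xs - ttil • g)
  rw [(hz.hasGradientAt_fenchel hμ hsc).gradient] at hon ⊢
  refine ⟨hon.le, fun y hy => ?_⟩
  have hy' : ⟪g, y⟫ ≤ β := hy
  have h1 := hz y
  rw [inner_sub_left, real_inner_smul_left, inner_sub_right, inner_sub_right g] at h1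
  have h2 : ttil * (⟪g, y⟫ - ⟪g, z⟫) ≤ 0 :=
    mul_nonpos_of_nonneg_of_nonpos httilpos.le (by linarith)
  simp only [Breg, inner_sub_right]
  linarith
end
end
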